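/- Let Σ be a real symmetric positive definite d×d matrix, T, β > 0, K := I + TΣ⁻¹. Suppose A : ℝ → (d×d real symmetric positive definite matrices) is differentiable, that S(t) := K·A(t)·K − 2βT·K is positive definite for all t, and that A satisfies the matrix ODE A'(t) = −β·K⁻¹[ ((βΣ)⁻¹ − A(t)⁻¹)·S(t) + S(t)·((βΣ)⁻¹ − A(t)⁻¹) ]·K⁻¹. Then the function L(t) := Tr( ((βΣ)⁻¹ − A(t)⁻¹)² ) (the squared Frobenius norm of (βΣ)⁻¹ − A(t)⁻¹) satisfies L'(t) < 0 at every t for which A(t) ≠ βΣ; i.e., the squared Frobenius norm is a strict Lyapunov function for the continuous-time limit of the BRWP covariance dynamics. -/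

import Mathlib

/-!
Put `c = βT`, `E = (βΣ)⁻¹`, `D = E - A⁻¹` and `N = A⁻¹K⁻¹S`. Then `N = K - 2cA⁻¹` has the positive
definite inverse `K⁻¹ + 2cS⁻¹`, so `0 < N < K` in the Loewner order, and `2cD = K + N - 2`. Up to a
negative factor `L'` is `tr((K + N - 2) N (K + N - 2) K⁻¹ (K - N))`, which has to be positive for
all `K ≥ 1`, `0 < N < K` with `K + N ≠ 2`.

Diagonalise simultaneously: `K = BBᵀ`, `N = B diag(n) Bᵀ` with `0 < n < 1`. With `H = BᵀB ≥ 1` and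
`Y = H - diag(2 / (1 + n))` the trace becomes `∑ w(n_c, n_a, n_b) Y_ca H_ab Y_bc`. Its part cubic in
`Y` only sees the symmetrisation of `w` over the permutations of `(c, a, b)`, so there `w` may be
replaced by a weight `v` that is positive semidefinite in `(a, b)`. This leaves
`∑ v(n_c, n_a, n_b) Y_ca (H - 1)_ab Y_bc ≥ 0` and a form `∑ r(n_c, n_a) Y_ca²` in which
`r(c, a) + r(a, c) > 0`.
-/

open Matrix

section Calculus

theorem hasDerivAt_matrix {m n 𝕜 F : Type*} [Finite m] [Finite n] [NontriviallyNormedField 𝕜]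
    [NormedAddCommGroup F] [NormedSpace 𝕜 F] {A : 𝕜 → Matrix m n F} {A' : Matrix m n F} {t : 𝕜} :
    HasDerivAt A A' t ↔ ∀ i j, HasDerivAt (fun s => A s i j) (A' i j) t := by
  have := Fintype.ofFinite m
  have := Fintype.ofFinite n
  exact hasDerivAt_pi.trans (forall_congr' fun _ => hasDerivAt_pi)

variable {ι 𝕜 : Type*} [Fintype ι] [DecidableEq ι] [NontriviallyNormedField 𝕜]
  {A : 𝕜 → Matrix ι ι 𝕜} {A' : Matrix ι ι 𝕜} {t : 𝕜}

theorem hasDerivAt_matrix_inv [CompleteSpace 𝕜] (hA : HasDerivAt A A' t) (hu : IsUnit (A t)) :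
    HasDerivAt (fun s => (A s)⁻¹) (-((A t)⁻¹ * A' * (A t)⁻¹)) t := by
  let := Matrix.linftyOpNormedRing (n := ι) (α := 𝕜)
  let := Matrix.linftyOpNormedAlgebra (R := 𝕜) (n := ι) (α := 𝕜)
  have : @CompleteSpace (Matrix ι ι 𝕜) PseudoMetricSpace.toUniformSpace :=
    FiniteDimensional.complete 𝕜 _
  obtain ⟨u, hu⟩ := hu
  have hinv : HasFDerivAt Ring.inverse (-ContinuousLinearMap.mulLeftRight 𝕜 _ ↑u⁻¹ ↑u⁻¹) (A t) :=
    hu ▸ hasFDerivAt_ringInverse u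
  simpa [Function.comp_def, ← nonsing_inv_eq_ringInverse, ← hu] using!
    hinv.comp_hasDerivAt t hA

theorem hasDerivAt_trace_sq (hA : HasDerivAt A A' t) :
    HasDerivAt (fun s => trace (A s ^ 2)) (2 * trace (A t * A')) t := by
  have hentry := hasDerivAt_matrix.1 hA
  have htrace : HasDerivAt (fun s => ∑ i, ∑ j, A s i j * A s j i)
      (∑ i, ∑ j, (A' i j * A t j i + A t i j * A' j i)) t :=
    .fun_sum fun i _ => .fun_sum fun j _ => (hentry i j).mul (hentry j i)
  have hderiv : ∑ i, ∑ j, (A' i j * A t j i + A t i j * A' j i) = 2 * trace (A t * A') := by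
    rw [two_mul]
    nth_rw 1 [trace_mul_comm]
    simp [trace, mul_apply, Finset.sum_add_distrib]
  simpa only [pow_two, trace, diag_apply, mul_apply, hderiv] using htrace

theorem hasDerivAt_trace_sub_inv_sq [CompleteSpace 𝕜] (E : Matrix ι ι 𝕜) (hA : HasDerivAt A A' t)
    (hu : IsUnit (A t)) :
    HasDerivAt (fun s => trace ((E - (A s)⁻¹) ^ 2))
      (2 * trace ((E - (A t)⁻¹) * ((A t)⁻¹ * A' * (A t)⁻¹))) t := by
  have hinv := hasDerivAt_matrix_inv hA hu
  have hsub : HasDerivAt (fun s => E - (A s)⁻¹) ((A t)⁻¹ * A' * (A t)⁻¹) t :=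
    hasDerivAt_matrix.2 fun i j => by simpa using (hasDerivAt_matrix.1 hinv i j).const_sub (E i j)
  exact hasDerivAt_trace_sq hsub

end Calculus

section SimultaneousDiagonalization

open scoped MatrixOrder ComplexOrder

variable {ι 𝕜 : Type*} [Fintype ι] [DecidableEq ι] [RCLike 𝕜]

theorem exists_simultaneous_diagonalization {K N : Matrix ι ι 𝕜} (hK : K.PosDef)
    (hN : N.IsHermitian) :
    ∃ (B : Matrix ι ι 𝕜) (n : ι → ℝ), IsUnit B ∧ K = B * Bᴴ ∧
      N = B * diagonal (RCLike.ofReal ∘ n) * Bᴴ := by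
  obtain ⟨C, hC, rfl⟩ :=
    CStarAlgebra.isStrictlyPositive_iff_eq_mul_star_self.1 hK.isStrictlyPositive
  have hCN : (C⁻¹ * N * C⁻¹ᴴ).IsHermitian := isHermitian_mul_mul_conjTranspose _ hN
  obtain ⟨V, n, hVV, hspec⟩ : ∃ (V : Matrix ι ι 𝕜) (n : ι → ℝ), V * Vᴴ = 1 ∧
      C⁻¹ * N * C⁻¹ᴴ = V * diagonal (RCLike.ofReal ∘ n) * Vᴴ :=
    ⟨_, _, Unitary.coe_mul_star_self _, hCN.spectral_theorem⟩
  have hCC : C * C⁻¹ = 1 := mul_nonsing_inv _ ((isUnit_iff_isUnit_det _).1 hC)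
  have hCC' : C⁻¹ᴴ * Cᴴ = 1 := by rw [← conjTranspose_mul, hCC, conjTranspose_one]
  refine ⟨C * V, n, hC.mul (.of_mul_eq_one _ hVV), ?_, ?_⟩
  · rw [conjTranspose_mul, mul_assoc, ← mul_assoc V, hVV, one_mul,
      star_eq_conjTranspose]
  · calc N = (C * C⁻¹) * N * (C⁻¹ᴴ * Cᴴ) := by rw [hCC, hCC', one_mul, mul_one]
      _ = C * (C⁻¹ * N * C⁻¹ᴴ) * Cᴴ := by simp only [mul_assoc]
      _ = C * V * diagonal (RCLike.ofReal ∘ n) * (C * V)ᴴ := by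
        rw [hspec]
        simp only [conjTranspose_mul, mul_assoc]

theorem posSemidef_conjTranspose_mul_self_sub_one {B : Matrix ι ι 𝕜}
    (hB : (B * Bᴴ - 1).PosSemidef) : (Bᴴ * B - 1).PosSemidef := by
  have hBB : IsUnit (B * Bᴴ) := by
    simpa using (PosDef.one.posSemidef_add hB).isUnit
  have hunit : IsUnit B := isUnit_of_mul_isUnit_left hBB
  rw [← hunit.posSemidef_star_right_conjugate_iff, star_eq_conjTranspose]
  convert! hB.add (hB.pow 2) using 1
  noncomm_ring

end SimultaneousDiagonalization

theorem six_nsmul_sum_eq_sum_perm {ι M : Type*} [Fintype ι] [AddCommMonoid M] (f : ι → ι → ι → M) :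
    6 • ∑ c, ∑ a, ∑ b, f c a b =
      ∑ c, ∑ a, ∑ b, (f c a b + f c b a + f a c b + f a b c + f b c a + f b a c) := by
  have swap₁₂ (g : ι → ι → ι → M) : ∑ c, ∑ a, ∑ b, g a c b = ∑ c, ∑ a, ∑ b, g c a b :=
    Finset.sum_comm
  have swap₂₃ (g : ι → ι → ι → M) : ∑ c, ∑ a, ∑ b, g c b a = ∑ c, ∑ a, ∑ b, g c a b :=
    Finset.sum_congr rfl fun _ _ => Finset.sum_comm
  have h₁₃₂ := swap₂₃ f
  have h₂₁₃ := swap₁₂ f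
  have h₂₃₁ := (swap₁₂ fun c a b => f c b a).trans h₁₃₂
  have h₃₁₂ := (swap₂₃ fun c a b => f a c b).trans h₂₁₃
  have h₃₂₁ := (swap₁₂ fun c a b => f b c a).trans h₃₁₂
  simp only [Finset.sum_add_distrib, h₁₃₂, h₂₁₃, h₂₃₁, h₃₁₂, h₃₂₁]
  abel

section WeightedTrace

variable {ι R : Type*} [Fintype ι]

/-- The trace of `Y * X * Y` with each of its monomials `Y c a * X a b * Y b c` weighted by
`w c a b`. -/
def weightedTrace [CommSemiring R] (w : ι → ι → ι → R) (Y X : Matrix ι ι R) : R :=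
  ∑ c, ∑ a, ∑ b, w c a b * (Y c a * X a b * Y b c)

theorem weightedTrace_add_weight [CommSemiring R] (w w' : ι → ι → ι → R) (Y X : Matrix ι ι R) :
    weightedTrace (fun c a b => w c a b + w' c a b) Y X =
      weightedTrace w Y X + weightedTrace w' Y X := by
  simp only [weightedTrace, add_mul, Finset.sum_add_distrib]

theorem weightedTrace_add [CommSemiring R] (w : ι → ι → ι → R) (Y X X' : Matrix ι ι R) :
    weightedTrace w Y (X + X') = weightedTrace w Y X + weightedTrace w Y X' := by
  simp only [weightedTrace, Matrix.add_apply, mul_add, add_mul, Finset.sum_add_distrib]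

theorem weightedTrace_diagonal [CommSemiring R] [DecidableEq ι] (w : ι → ι → ι → R)
    (Y : Matrix ι ι R) (v : ι → R) :
    weightedTrace w Y (diagonal v) = ∑ c, ∑ a, w c a a * v a * (Y c a * Y a c) := by
  simp only [weightedTrace, diagonal_apply, mul_ite, ite_mul, mul_zero, zero_mul,
    Finset.sum_ite_eq, Finset.mem_univ, if_true]
  exact Finset.sum_congr rfl fun c _ => Finset.sum_congr rfl fun a _ => by ring

theorem trace_diagonal_mul_eq_weightedTrace [CommSemiring R] [DecidableEq ι] (p q r : ι → R)
    (Y X : Matrix ι ι R) :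
    trace (diagonal p * Y * diagonal q * X * diagonal r * Y) =
      weightedTrace (fun c a b => p c * q a * r b) Y X := by
  simp only [trace, diag_apply, weightedTrace]
  refine Finset.sum_congr rfl fun c _ => ?_
  simp only [mul_apply (M := _ * diagonal r), mul_diagonal, mul_apply (N := X), diagonal_mul,
    Finset.sum_mul]
  rw [Finset.sum_comm]
  exact Finset.sum_congr rfl fun a _ => Finset.sum_congr rfl fun b _ => by ring

theorem weightedTrace_self_congr [CommSemiring R] [IsAddTorsionFree R] {Y : Matrix ι ι R}
    (hY : Y.IsSymm) {w w' : ι → ι → ι → R}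
    (hw : ∀ c a b, w c a b + w c b a + w a c b + w a b c + w b c a + w b a c =
      w' c a b + w' c b a + w' a c b + w' a b c + w' b c a + w' b a c) :
    weightedTrace w Y Y = weightedTrace w' Y Y := by
  have hsymm : ∀ (v : ι → ι → ι → R), 6 • weightedTrace v Y Y = ∑ c, ∑ a, ∑ b,
      (v c a b + v c b a + v a c b + v a b c + v b c a + v b a c) * (Y c a * Y a b * Y b c) := by
    intro v
    rw [weightedTrace, six_nsmul_sum_eq_sum_perm]
    refine Finset.sum_congr rfl fun c _ => Finset.sum_congr rfl fun a _ =>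
      Finset.sum_congr rfl fun b _ => ?_
    rw [hY.apply c a, hY.apply a b, hY.apply b c]
    ring
  refine IsAddTorsionFree.nsmul_right_injective (n := 6) (by norm_num) ?_
  simp only [hsymm, hw]

theorem weightedTrace_nonneg_of_posSemidef {Y X : Matrix ι ι ℝ} (hY : Y.IsSymm)
    (hX : X.PosSemidef) {α : ι → ℝ} (hα : ∀ c, 0 ≤ α c) (u : ι → ι → ℝ) :
    0 ≤ weightedTrace (fun c a b => α c * (u c a * u c b)) Y X := by
  refine Finset.sum_nonneg fun c _ => ?_
  have hquad := mul_nonneg (hα c) (hX.dotProduct_mulVec_nonneg fun a => u c a * Y c a)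
  convert! hquad using 1
  simp only [dotProduct, mulVec, Finset.mul_sum, star_trivial]
  refine Finset.sum_congr rfl fun a _ => Finset.sum_congr rfl fun b _ => ?_
  rw [hY.apply c b]
  ring

end WeightedTrace

theorem sum_mul_mul_transpose_pos {ι : Type*} [Fintype ι] {Y : Matrix ι ι ℝ} (hY : Y.IsSymm)
    (hY0 : Y ≠ 0) {r : ι → ι → ℝ} (hr : ∀ c a, 0 < r c a + r a c) :
    0 < ∑ c, ∑ a, r c a * (Y c a * Y a c) := by
  obtain ⟨i, j, hij⟩ : ∃ i j, Y i j ≠ 0 := by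
    by_contra! h
    exact hY0 (Matrix.ext h)
  have hterm (c a : ι) : 0 ≤ (r c a + r a c) * Y c a ^ 2 :=
    mul_nonneg (hr c a).le (sq_nonneg _)
  have hpos : 0 < ∑ c, ∑ a, (r c a + r a c) * Y c a ^ 2 :=
    Finset.sum_pos' (fun c _ => Finset.sum_nonneg fun a _ => hterm c a) ⟨i, Finset.mem_univ _,
      Finset.sum_pos' (fun a _ => hterm i a) ⟨j, Finset.mem_univ _,
        mul_pos (hr i j) (by positivity)⟩⟩
  have hswap : ∑ c, ∑ a, r a c * Y c a ^ 2 = ∑ c, ∑ a, r c a * Y c a ^ 2 := by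
    rw [Finset.sum_comm]
    simp only [hY.apply]
  simp only [add_mul, Finset.sum_add_distrib, hswap] at hpos
  simp only [hY.apply, ← pow_two]
  linarith

noncomputable section

/-- The weight with which `Y c a * H a b * Y b c` enters the derivative of the Lyapunov function in
the simultaneous eigenbasis. The arguments are the eigenvalues of `N` relative to `K` at the indices
`c`, `a`, `b`. -/
def flowWeight (c a b : ℝ) : ℝ := (1 - c ^ 2) * (1 + a) * b

/-- A weight with the same symmetrisation as `flowWeight` that is a nonnegative combination of
squares `u(a) * u(b)` for each `c ∈ [0, 1]`. Among the weights
`f(c) + g(c) * (a + b) + h(c) * a * b` with polynomial `f`, `g`, `h` and this symmetrisation,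
positive semidefiniteness at `c = 0` and `c = 1` leaves only this one. -/
def sosWeight (c a b : ℝ) : ℝ :=
  c * ((1 - (1 + c) / 2 * a) * (1 - (1 + c) / 2 * b)) + (2 - c ^ 2 - c * (1 + c) ^ 2 / 4) * (a * b)

/-- The coefficient of `Y c a * Y a c` that remains once `flowWeight`, paired with `H`, is replaced
by `sosWeight`, paired with `H - 1`; here `H` is `Y` plus the diagonal matrix of `2 / (1 + a)`. -/
def residualWeight (c a : ℝ) : ℝ :=
  flowWeight c a a * (2 / (1 + a)) - sosWeight c a a * (2 / (1 + a) - 1)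

end

theorem sum_perm_flowWeight_eq_sosWeight (c a b : ℝ) :
    flowWeight c a b + flowWeight c b a + flowWeight a c b + flowWeight a b c + flowWeight b c a
        + flowWeight b a c =
      sosWeight c a b + sosWeight c b a + sosWeight a c b + sosWeight a b c + sosWeight b c a
        + sosWeight b a c := by
  simp only [flowWeight, sosWeight]
  ring

theorem residualWeight_add_swap_pos {a c : ℝ} (ha : 0 < a) (ha1 : a < 1) (hc : 0 < c)
    (hc1 : c < 1) : 0 < residualWeight c a + residualWeight a c := by
  set g := (1 + a) * (1 + c) with hg
  have hac : 0 < a * c := mul_pos ha hc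
  have hform : residualWeight c a + residualWeight a c =
      (g ^ 2 * (a + c - 2 * a * c) - |a - c| ^ 2 * (4 - g)) / g := by
    rw [hg, sq_abs]
    simp only [residualWeight, flowWeight, sosWeight]
    field_simp
    ring
  have hdiff : |a - c| < a + c - 2 * a * c := by
    rw [abs_lt]
    constructor <;> nlinarith
  have hdiff' : |a - c| ≤ a + c := by linarith
  have hg1 : 1 + (a + c) ≤ g := by linarith
  have hg4 : g ≤ 4 := by nlinarith
  have hbound : |a - c| * (4 - g) ≤ g ^ 2 :=
    calc |a - c| * (4 - g) ≤ (a + c) * (3 - (a + c)) :=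
        mul_le_mul hdiff' (by linarith) (by linarith) (by linarith)
      _ ≤ (1 + (a + c)) ^ 2 := by nlinarith [sq_nonneg (4 * (a + c) - 1)]
      _ ≤ g ^ 2 := by gcongr
  have hnum : |a - c| ^ 2 * (4 - g) < g ^ 2 * (a + c - 2 * a * c) :=
    calc |a - c| ^ 2 * (4 - g) = |a - c| * (|a - c| * (4 - g)) := by ring
      _ ≤ |a - c| * g ^ 2 := by gcongr
      _ < (a + c - 2 * a * c) * g ^ 2 := by gcongr
      _ = _ := mul_comm _ _
  rw [hform]
  exact div_pos (sub_pos.2 hnum) (by positivity)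

section FlowWeight

variable {ι : Type*} [Fintype ι]

theorem weightedTrace_sosWeight_nonneg {n : ι → ℝ} (hn : ∀ i, 0 ≤ n i) (hn1 : ∀ i, n i ≤ 1)
    {Y X : Matrix ι ι ℝ} (hY : Y.IsSymm) (hX : X.PosSemidef) :
    0 ≤ weightedTrace (fun c a b => sosWeight (n c) (n a) (n b)) Y X := by
  simp only [sosWeight, weightedTrace_add_weight]
  refine add_nonneg
    (weightedTrace_nonneg_of_posSemidef hY hX hn fun c a => 1 - (1 + n c) / 2 * n a)
    (weightedTrace_nonneg_of_posSemidef hY hX (fun c => ?_) fun _ a => n a)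
  nlinarith [hn c, hn1 c, mul_nonneg (hn c) (sub_nonneg.2 (hn1 c)), pow_nonneg (hn c) 2]

theorem weightedTrace_flowWeight_add_diagonal [DecidableEq ι] (n : ι → ℝ) {Y : Matrix ι ι ℝ}
    (hY : Y.IsSymm) :
    weightedTrace (fun c a b => flowWeight (n c) (n a) (n b)) Y
        (Y + diagonal fun i => 2 / (1 + n i)) =
      weightedTrace (fun c a b => sosWeight (n c) (n a) (n b)) Y
          (Y + diagonal fun i => 2 / (1 + n i) - 1) +
        ∑ c, ∑ a, residualWeight (n c) (n a) * (Y c a * Y a c) := by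
  have hcubic : weightedTrace (fun c a b => flowWeight (n c) (n a) (n b)) Y Y =
      weightedTrace (fun c a b => sosWeight (n c) (n a) (n b)) Y Y :=
    weightedTrace_self_congr hY fun c a b => sum_perm_flowWeight_eq_sosWeight (n c) (n a) (n b)
  rw [weightedTrace_add, weightedTrace_add, hcubic, add_assoc, weightedTrace_diagonal,
    weightedTrace_diagonal]
  simp only [residualWeight, sub_mul, Finset.sum_sub_distrib, add_sub_cancel]

theorem weightedTrace_flowWeight_pos [DecidableEq ι] {n : ι → ℝ} (hn : ∀ i, 0 < n i)
    (hn1 : ∀ i, n i < 1) {H : Matrix ι ι ℝ} (hH : (H - 1).PosSemidef)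
    (hne : H - diagonal (fun i => 2 / (1 + n i)) ≠ 0) :
    0 < weightedTrace (fun c a b => flowWeight (n c) (n a) (n b))
      (H - diagonal fun i => 2 / (1 + n i)) H := by
  obtain ⟨Y, rfl⟩ : ∃ Y, H = Y + diagonal fun i => 2 / (1 + n i) :=
    ⟨_, (sub_add_cancel _ _).symm⟩
  rw [add_sub_cancel_right] at hne ⊢
  have hshift : (Y + diagonal fun i => 2 / (1 + n i)) - 1 =
      Y + diagonal fun i => 2 / (1 + n i) - 1 := by
    rw [add_sub_assoc, ← diagonal_one, diagonal_sub]
  rw [hshift] at hH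
  have hY : Y.IsSymm := by
    simpa using (isHermitian_iff_isSymm.1 hH.isHermitian).sub
      (isSymm_diagonal fun i => 2 / (1 + n i) - 1)
  rw [weightedTrace_flowWeight_add_diagonal n hY]
  exact add_pos_of_nonneg_of_pos
    (weightedTrace_sosWeight_nonneg (fun i => (hn i).le) (fun i => (hn1 i).le) hY hH)
    (sum_mul_mul_transpose_pos hY hne fun c a =>
      residualWeight_add_swap_pos (hn a) (hn1 a) (hn c) (hn1 c))

end FlowWeight

theorem trace_mul_anticommutator {ι R : Type*} [Fintype ι] [CommRing R] {D P Q S : Matrix ι ι R}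
    (hD : D.IsSymm) (hP : P.IsSymm) (hQ : Q.IsSymm) (hS : S.IsSymm) (hPQS : (P * Q * S).IsSymm) :
    trace (D * (P * (Q * (D * S + S * D) * Q) * P)) =
      2 * trace (D * (P * Q * S) * D * Q * P) := by
  have hSQP : S * Q * P = P * Q * S := by
    rw [← hPQS.eq, transpose_mul, transpose_mul, hP.eq, hQ.eq, hS.eq, mul_assoc]
  have hleft : trace (D * P * Q * D * (S * Q * P)) = trace (D * (P * Q * S) * D * Q * P) := by
    rw [hSQP, ← trace_transpose]
    simp only [transpose_mul _ (P * Q * S), hPQS.eq]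
    simp only [transpose_mul, hD.eq, hP.eq, hQ.eq]
    rw [← mul_assoc, ← mul_assoc, ← mul_assoc, trace_mul_comm]
    simp only [mul_assoc]
  calc trace (D * (P * (Q * (D * S + S * D) * Q) * P))
      = trace (D * P * Q * D * (S * Q * P)) + trace (D * (P * Q * S) * D * Q * P) := by
        rw [← trace_add]
        congr 1
        noncomm_ring
    _ = 2 * trace (D * (P * Q * S) * D * Q * P) := by rw [hleft, two_mul]

section LyapunovTrace

variable {ι : Type*} [Fintype ι] [DecidableEq ι]

theorem transpose_mul_add_sub_two {R : Type*} [Field R] (B : Matrix ι ι R) {n : ι → R}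
    (hn : ∀ i, 1 + n i ≠ 0) :
    Bᵀ * (B * Bᵀ + B * diagonal n * Bᵀ - 2) =
      (Bᵀ * B - diagonal fun i => 2 / (1 + n i)) * (diagonal fun i => 1 + n i) * Bᵀ := by
  have hdiag : (diagonal fun i => 2 / (1 + n i)) * (diagonal fun i => 1 + n i) = 2 := by
    simp only [diagonal_mul_diagonal, div_mul_cancel₀ _ (hn _)]
    exact diagonal_ofNat 2
  rw [sub_mul, hdiag, ← diagonal_add, diagonal_one]
  noncomm_ring

theorem trace_mul_inv_mul_sub_eq_weightedTrace {B : Matrix ι ι ℝ} (hB : IsUnit B) {n : ι → ℝ}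
    (hn : ∀ i, 1 + n i ≠ 0) {K N : Matrix ι ι ℝ} (hK : K = B * Bᵀ) (hN : N = B * diagonal n * Bᵀ) :
    trace ((K + N - 2) * N * (K + N - 2) * K⁻¹ * (K - N)) =
      weightedTrace (fun c a b => flowWeight (n c) (n a) (n b))
        (Bᵀ * B - diagonal fun i => 2 / (1 + n i)) (Bᵀ * B) := by
  set Y := Bᵀ * B - diagonal fun i => 2 / (1 + n i)
  set M : Matrix ι ι ℝ := diagonal fun i => 1 + n i
  set W : Matrix ι ι ℝ := diagonal fun i => 1 - n i with hW
  set G := K + N - 2 with hG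
  have hGN : G * N = G * B * diagonal n * Bᵀ := by simp only [hN, mul_assoc]
  have hBG : Bᵀ * G = Y * M * Bᵀ := by
    rw [hG, hK, hN]
    exact transpose_mul_add_sub_two B hn
  have hBKN : Bᵀ * K⁻¹ * (K - N) = W * Bᵀ := by
    have hBt : IsUnit Bᵀ.det := by rwa [det_transpose, ← isUnit_iff_isUnit_det]
    have hKN : K - N = B * (W * Bᵀ) := by
      rw [hK, hN, hW, ← diagonal_sub, diagonal_one]
      noncomm_ring
    rw [hKN, hK, Matrix.mul_inv_rev, mul_nonsing_inv_cancel_left _ _ hBt,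
      nonsing_inv_mul_cancel_left _ _ ((isUnit_iff_isUnit_det B).1 hB)]
  have hMW : M * W = diagonal fun i => 1 - n i ^ 2 := by
    rw [diagonal_mul_diagonal]
    congr! 2 with i
    ring
  calc trace (G * N * G * K⁻¹ * (K - N))
      = trace (G * B * diagonal n * (Bᵀ * G) * K⁻¹ * (K - N)) := by
        rw [hGN]; simp only [mul_assoc]
    _ = trace (G * B * diagonal n * Y * M * (Bᵀ * K⁻¹ * (K - N))) := by
        rw [hBG]; simp only [mul_assoc]
    _ = trace (Bᵀ * G * B * diagonal n * Y * (M * W)) := by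
        rw [hBKN, ← mul_assoc, trace_mul_comm]; simp only [mul_assoc]
    _ = trace (M * W * Y * M * (Bᵀ * B) * diagonal n * Y) := by
        rw [hBG, trace_mul_comm]; simp only [mul_assoc]
    _ = _ := by rw [hMW, trace_diagonal_mul_eq_weightedTrace]; rfl

theorem trace_mul_inv_mul_sub_pos {K N : Matrix ι ι ℝ} (hK : (K - 1).PosSemidef) (hN : N.PosDef)
    (hKN : (K - N).PosDef) (hne : K + N ≠ 2) :
    0 < trace ((K + N - 2) * N * (K + N - 2) * K⁻¹ * (K - N)) := by
  have hKpd : K.PosDef := by simpa using hKN.add hN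
  obtain ⟨B, n, hB, hKB, hNB⟩ := exists_simultaneous_diagonalization hKpd hN.isHermitian
  simp only [RCLike.ofReal_real_eq_id, Function.id_comp] at hNB
  have hn (i) : 0 < n i := by
    rw [hNB, ← star_eq_conjTranspose, hB.posDef_star_right_conjugate_iff] at hN
    exact posDef_diagonal_iff.1 hN i
  have hn1 (i) : n i < 1 := by
    have hsub : K - N = B * (diagonal fun i => 1 - n i) * star B := by
      rw [hKB, hNB, ← diagonal_sub, diagonal_one, mul_sub, mul_one, sub_mul, star_eq_conjTranspose]
    rw [hsub, hB.posDef_star_right_conjugate_iff] at hKN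
    exact sub_pos.1 (posDef_diagonal_iff.1 hKN i)
  have hm (i) : 1 + n i ≠ 0 := by linarith [hn i]
  have hH : (Bᵀ * B - 1).PosSemidef :=
    posSemidef_conjTranspose_mul_self_sub_one (by rwa [← hKB])
  rw [trace_mul_inv_mul_sub_eq_weightedTrace hB hm hKB hNB]
  refine weightedTrace_flowWeight_pos hn hn1 hH fun hY => hne ?_
  have hBG : Bᵀ * (K + N - 2) = 0 := by
    rw [hKB, hNB, conjTranspose_eq_transpose_of_trivial, transpose_mul_add_sub_two B hm, hY,
      zero_mul, zero_mul]
  exact sub_eq_zero.1 (((isUnit_transpose B).2 hB).mul_right_eq_zero.1 hBG)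

theorem inv_mul_inv_mul_sub_smul {R : Type*} [CommRing R] {K A : Matrix ι ι R} (hK : IsUnit K)
    (hA : IsUnit A) (c : R) : A⁻¹ * K⁻¹ * (K * A * K - c • K) = K - c • A⁻¹ := by
  rw [isUnit_iff_isUnit_det] at hK hA
  simp only [mul_sub, mul_smul_comm, mul_assoc, nonsing_inv_mul _ hK, mul_one,
    nonsing_inv_mul_cancel_left _ _ hK, nonsing_inv_mul_cancel_left _ _ hA]

theorem sub_smul_inv_mul_inv_add_smul_inv {R : Type*} [CommRing R] {K A S : Matrix ι ι R} {c : R}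
    (hK : IsUnit K) (hA : IsUnit A) (hS : S = K * A * K - c • K) (hSu : IsUnit S) :
    (K - c • A⁻¹) * (K⁻¹ + c • S⁻¹) = 1 := by
  rw [← inv_mul_inv_mul_sub_smul hK hA, ← hS]
  rw [isUnit_iff_isUnit_det] at hK hA hSu
  calc A⁻¹ * K⁻¹ * S * (K⁻¹ + c • S⁻¹) = A⁻¹ * K⁻¹ * (S + c • K) * K⁻¹ := by
        simp only [mul_add, add_mul, mul_assoc, mul_smul_comm, smul_mul_assoc, mul_nonsing_inv _ hK,
          mul_nonsing_inv _ hSu]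
    _ = 1 := by
        rw [hS, sub_add_cancel]
        simp only [mul_assoc, nonsing_inv_mul_cancel_left _ _ hK, mul_nonsing_inv _ hK, mul_one,
          nonsing_inv_mul _ hA]

theorem posDef_sub_smul_inv {K A : Matrix ι ι ℝ} {c : ℝ} (hK : K.PosDef) (hA : IsUnit A)
    (hc : 0 ≤ c) (hS : (K * A * K - c • K).PosDef) : (K - c • A⁻¹).PosDef := by
  rw [← inv_eq_left_inv (sub_smul_inv_mul_inv_add_smul_inv hK.isUnit hA rfl hS.isUnit)]
  exact (hK.inv.add_posSemidef (hS.inv.posSemidef.smul hc)).inv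

theorem trace_sub_inv_mul_drift_pos {E A K S : Matrix ι ι ℝ} {c : ℝ} (hc : 0 < c)
    (hE : E.PosSemidef) (hA : A.PosDef) (hK : K = 1 + c • E) (hS : S = K * A * K - (2 * c) • K)
    (hSpd : S.PosDef) (hne : E ≠ A⁻¹) :
    0 < trace ((E - A⁻¹) *
      (A⁻¹ * (K⁻¹ * ((E - A⁻¹) * S + S * (E - A⁻¹)) * K⁻¹) * A⁻¹)) := by
  set N := K - (2 * c) • A⁻¹
  have hKsub : K - 1 = c • E := by rw [hK, add_sub_cancel_left]
  have hKpd : K.PosDef := hK ▸ PosDef.one.add_posSemidef (hE.smul hc.le)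
  have hNpd : N.PosDef :=
    posDef_sub_smul_inv hKpd hA.isUnit (by positivity) (hS ▸ hSpd)
  have hKN : K - N = (2 * c) • A⁻¹ := sub_sub_cancel _ _
  have hKN2 : K + N - 2 = (2 * c) • (E - A⁻¹) := by
    have hsum : K + N - 2 = (2 : ℝ) • (K - 1) - (K - N) := by
      rw [two_smul, ← one_add_one_eq_two]
      abel
    rw [hsum, hKN, hKsub, smul_smul, smul_sub]
  have hfactor : A⁻¹ * K⁻¹ * S = N := by
    rw [hS, inv_mul_inv_mul_sub_smul hKpd.isUnit hA.isUnit]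
  have hDsymm := isHermitian_iff_isSymm.1 (hE.isHermitian.sub hA.inv.isHermitian)
  have hPsymm := isHermitian_iff_isSymm.1 hA.inv.isHermitian
  have hQsymm := isHermitian_iff_isSymm.1 hKpd.inv.isHermitian
  have hSsymm := isHermitian_iff_isSymm.1 hSpd.isHermitian
  have hNsymm : (A⁻¹ * K⁻¹ * S).IsSymm := hfactor ▸ isHermitian_iff_isSymm.1 hNpd.isHermitian
  rw [trace_mul_anticommutator hDsymm hPsymm hQsymm hSsymm hNsymm, hfactor]
  have hpos : 0 < trace ((K + N - 2) * N * (K + N - 2) * K⁻¹ * (K - N)) := by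
    refine trace_mul_inv_mul_sub_pos (hKsub ▸ hE.smul hc.le) hNpd
      (hKN ▸ hA.inv.smul (by positivity)) fun h => hne ?_
    rw [h, sub_self] at hKN2
    exact sub_eq_zero.1 ((smul_eq_zero.1 hKN2.symm).resolve_left (by positivity))
  rw [hKN2, hKN] at hpos
  simp only [smul_mul_assoc, mul_smul_comm, trace_smul, smul_eq_mul] at hpos
  have hpos' : 0 < trace ((E - A⁻¹) * N * (E - A⁻¹) * K⁻¹ * A⁻¹) := by
    simpa [hc] using hpos
  positivity

end LyapunovTrace

/-- Along the continuous-time limit of the BRWP covariance dynamics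
`A'(t) = −β K⁻¹[((βΣ)⁻¹ − A(t)⁻¹)S(t) + S(t)((βΣ)⁻¹ − A(t)⁻¹)]K⁻¹` with
`S(t) = K A(t) K − 2βT K` positive definite and `K = I + TΣ⁻¹`, the squared Frobenius norm
`L(t) = Tr(((βΣ)⁻¹ − A(t)⁻¹)²)` is a strict Lyapunov function: `L'(t) < 0` whenever
`A(t) ≠ βΣ`. -/
theorem stmt_9 (d : ℕ) (Sig : Matrix (Fin d) (Fin d) ℝ) (T β : ℝ)
    (hSigsymm : Sig.IsSymm) (hSigpd : Sig.PosDef) (hT : 0 < T) (hβ : 0 < β)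
    (K : Matrix (Fin d) (Fin d) ℝ) (hK : K = 1 + T • Sig⁻¹)
    (A A' : ℝ → Matrix (Fin d) (Fin d) ℝ)
    (hAdiff : ∀ (t : ℝ) (i j : Fin d), HasDerivAt (fun s => A s i j) (A' t i j) t)
    (hAsymm : ∀ t, (A t).IsSymm) (hApd : ∀ t, (A t).PosDef)
    (S : ℝ → Matrix (Fin d) (Fin d) ℝ)
    (hS : ∀ t, S t = K * A t * K - (2 * β * T) • K)
    (hSpd : ∀ t, (S t).PosDef)
    (hODE : ∀ t, A' t = (-β) • (K⁻¹ *
      (((β • Sig)⁻¹ - (A t)⁻¹) * S t + S t * ((β • Sig)⁻¹ - (A t)⁻¹)) * K⁻¹)) :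
    ∀ t : ℝ, A t ≠ β • Sig →
      ∃ l : ℝ, HasDerivAt (fun s => Matrix.trace (((β • Sig)⁻¹ - (A s)⁻¹) ^ 2)) l t ∧
        l < 0 := by
  intro t hne
  have hE : (β • Sig)⁻¹.PosDef := (hSigpd.smul hβ).inv
  have hKE : K = 1 + (β * T) • (β • Sig)⁻¹ := by
    have hinv : (β • Sig)⁻¹ = β⁻¹ • Sig⁻¹ :=
      Matrix.inv_smul' Sig (Units.mk0 β hβ.ne')
        ((Matrix.isUnit_iff_isUnit_det _).1 hSigpd.isUnit)
    rw [hK, hinv, smul_smul, mul_right_comm, mul_inv_cancel₀ hβ.ne', one_mul]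
  have hSE : S t = K * A t * K - (2 * (β * T)) • K := by rw [hS t, mul_assoc 2]
  have hEA : (β • Sig)⁻¹ ≠ (A t)⁻¹ := fun h =>
    hne (Matrix.inv_inj h.symm ((Matrix.isUnit_iff_isUnit_det _).1 (hApd t).isUnit))
  have hpos := trace_sub_inv_mul_drift_pos (mul_pos hβ hT) hE.posSemidef (hApd t) hKE hSE
    (hSpd t) hEA
  refine ⟨_, hasDerivAt_trace_sub_inv_sq _ (hasDerivAt_matrix.2 (hAdiff t)) (hApd t).isUnit, ?_⟩
  rw [hODE t]
  simp only [Matrix.mul_smul, Matrix.smul_mul, Matrix.trace_smul, smul_eq_mul]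
  nlinarith [mul_pos hβ hpos]
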